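/- For all w1, w2 ∈ H^1 one has S(w1 *̄ w2) = S(w1) * S(w2); that is, S is a ℚ-algebra isomorphism from (H^1, *̄) to (H^1, *). -/

import Mathlib

open scoped BigOperators

/-- The two-letter alphabet {x, y}. -/
inductive Letter : Type
  | x : Letter
  | y : Letter
deriving DecidableEq

/-- `H = ℚ⟨x,y⟩`, the noncommutative polynomial ring over ℚ in two
indeterminates, realized as the monoid algebra of the free monoid on `{x,y}`. -/
abbrev H : Type := MonoidAlgebra ℚ (FreeMonoid Letter)

namespace H

/-- The monomial (word) of `H` corresponding to an element of the free monoid. -/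
noncomputable def word (w : FreeMonoid Letter) : H := MonoidAlgebra.single w 1

/-- The generator `x`. -/
noncomputable def X : H := word (FreeMonoid.of Letter.x)

/-- The generator `y`. -/
noncomputable def Y : H := word (FreeMonoid.of Letter.y)

/-- The word `z_k = x^{k-1} y` (for `k ≥ 1`). -/
def zW (k : ℕ) : FreeMonoid Letter :=
  FreeMonoid.ofList (List.replicate (k - 1) Letter.x ++ [Letter.y])

/-- `z_k = x^{k-1} y` as an element of `H`. -/
noncomputable def z (k : ℕ) : H := word (zW k)

/-- A list `[k₁,…,kₙ]` gives the word `z_{k₁} z_{k₂} ⋯ z_{kₙ}`. -/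
def zListW (ks : List ℕ) : FreeMonoid Letter :=
  FreeMonoid.ofList (ks.flatMap fun k => List.replicate (k - 1) Letter.x ++ [Letter.y])

/-- `H¹ = ℚ + Hy` as a ℚ-submodule of `H`. -/
noncomputable def H1 : Submodule ℚ H :=
  LinearMap.range (LinearMap.mulRight ℚ Y) ⊔ Submodule.span ℚ {1}

/-- `H⁰ = ℚ + xHy` as a ℚ-submodule of `H`. -/
noncomputable def H0 : Submodule ℚ H :=
  LinearMap.range ((LinearMap.mulRight ℚ Y).comp (LinearMap.mulLeft ℚ X)) ⊔
    Submodule.span ℚ {1}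

/-- Parse a word of `H¹` into the exponent list of its `z`-decomposition:
`z_{k₁}⋯z_{kₙ} ↦ [k₁,…,kₙ]` (auxiliary accumulator version). -/
def toZAux : List Letter → ℕ → List ℕ
  | [], _ => []
  | Letter.x :: r, n => toZAux r (n + 1)
  | Letter.y :: r, n => (n + 1) :: toZAux r 0

/-- The `z`-decomposition of a word of `H¹`. -/
def toZ (w : FreeMonoid Letter) : List ℕ := toZAux (FreeMonoid.toList w) 0

/-- The harmonic product on words of `H¹` (via `z`-decompositions):
`1 * w = w * 1 = w` and
`z_k w₁ * z_l w₂ = z_k (w₁ * z_l w₂) + z_l (z_k w₁ * w₂) + z_{k+l} (w₁ * w₂)`. -/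
noncomputable def harmW : List ℕ → List ℕ → H
  | [], w => word (zListW w)
  | k :: w1, [] => word (zListW (k :: w1))
  | k :: w1, l :: w2 =>
      z k * harmW w1 (l :: w2) + z l * harmW (k :: w1) w2 + z (k + l) * harmW w1 w2
termination_by w1 w2 => w1.length + w2.length
decreasing_by all_goals simp [Nat.lt_succ_iff] <;> omega

/-- The n-harmonic product on words of `H¹`:
`1 *̄ w = w *̄ 1 = w` and
`z_k w₁ *̄ z_l w₂ = z_k (w₁ *̄ z_l w₂) + z_l (z_k w₁ *̄ w₂) − z_{k+l} (w₁ *̄ w₂)`. -/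
noncomputable def nharmW : List ℕ → List ℕ → H
  | [], w => word (zListW w)
  | k :: w1, [] => word (zListW (k :: w1))
  | k :: w1, l :: w2 =>
      z k * nharmW w1 (l :: w2) + z l * nharmW (k :: w1) w2 - z (k + l) * nharmW w1 w2
termination_by w1 w2 => w1.length + w2.length
decreasing_by all_goals simp [Nat.lt_succ_iff] <;> omega

/-- The harmonic product `*` on `H¹`, extended ℚ-bilinearly. -/
noncomputable def harm (a b : H) : H :=
  Finsupp.sum a.coeff fun w1 c1 =>
    Finsupp.sum b.coeff fun w2 c2 => (c1 * c2) • harmW (toZ w1) (toZ w2)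

/-- The n-harmonic product `*̄` on `H¹`, extended ℚ-bilinearly. -/
noncomputable def nharm (a b : H) : H :=
  Finsupp.sum a.coeff fun w1 c1 =>
    Finsupp.sum b.coeff fun w2 c2 => (c1 * c2) • nharmW (toZ w1) (toZ w2)

/-- The letter exchange `τ(x) = y`, `τ(y) = x`. -/
def τ : Letter → Letter
  | Letter.x => Letter.y
  | Letter.y => Letter.x

/-- `δ(w) = 1` if `w` is the empty word, `0` otherwise. -/
def δ : List Letter → ℚ
  | [] => 1
  | _ :: _ => 0

/-- The shuffle product on words:
`1 ш w = w ш 1 = w` and `u₁w₁ ш u₂w₂ = u₁(w₁ ш u₂w₂) + u₂(u₁w₁ ш w₂)`. -/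
noncomputable def shW : List Letter → List Letter → H
  | [], w => word (FreeMonoid.ofList w)
  | u :: w, [] => word (FreeMonoid.ofList (u :: w))
  | u1 :: w1, u2 :: w2 =>
      word (FreeMonoid.of u1) * shW w1 (u2 :: w2) +
        word (FreeMonoid.of u2) * shW (u1 :: w1) w2
termination_by w1 w2 => w1.length + w2.length
decreasing_by all_goals simp [Nat.lt_succ_iff]

/-- The n-shuffle product on words: `1 ш̄ w = w ш̄ 1 = w` and
`u₁w₁ ш̄ u₂w₂ = u₁(w₁ ш̄ u₂w₂) + u₂(u₁w₁ ш̄ w₂) − δ(w₁)τ(u₁)u₂w₂ − δ(w₂)τ(u₂)u₁w₁`. -/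
noncomputable def nshW : List Letter → List Letter → H
  | [], w => word (FreeMonoid.ofList w)
  | u :: w, [] => word (FreeMonoid.ofList (u :: w))
  | u1 :: w1, u2 :: w2 =>
      word (FreeMonoid.of u1) * nshW w1 (u2 :: w2) +
        word (FreeMonoid.of u2) * nshW (u1 :: w1) w2 -
        δ w1 • word (FreeMonoid.ofList (τ u1 :: u2 :: w2)) -
        δ w2 • word (FreeMonoid.ofList (τ u2 :: u1 :: w1))
termination_by w1 w2 => w1.length + w2.length
decreasing_by all_goals simp [Nat.lt_succ_iff]

/-- The shuffle product `ш` on `H`, extended ℚ-bilinearly. -/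
noncomputable def sh (a b : H) : H :=
  Finsupp.sum a.coeff fun w1 c1 =>
    Finsupp.sum b.coeff fun w2 c2 =>
      (c1 * c2) • shW (FreeMonoid.toList w1) (FreeMonoid.toList w2)

/-- The n-shuffle product `ш̄` on `H`, extended ℚ-bilinearly. -/
noncomputable def nsh (a b : H) : H :=
  Finsupp.sum a.coeff fun w1 c1 =>
    Finsupp.sum b.coeff fun w2 c2 =>
      (c1 * c2) • nshW (FreeMonoid.toList w1) (FreeMonoid.toList w2)

/-- `S₁`: the ℚ-algebra endomorphism of `H` with `S₁(x) = x`, `S₁(y) = x + y`. -/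
noncomputable def S1 : H →ₐ[ℚ] H :=
  MonoidAlgebra.lift ℚ H (FreeMonoid Letter)
    (FreeMonoid.lift fun u => match u with
      | Letter.x => X
      | Letter.y => X + Y)

/-- `S₂`: the ℚ-algebra endomorphism of `H` with `S₂(x) = x`, `S₂(y) = y − x`. -/
noncomputable def S2 : H →ₐ[ℚ] H :=
  MonoidAlgebra.lift ℚ H (FreeMonoid Letter)
    (FreeMonoid.lift fun u => match u with
      | Letter.x => X
      | Letter.y => Y - X)

/-- `S` on a word: `S(1) = 1` and `S(Fy) = S₁(F)y`. -/
noncomputable def SW (w : FreeMonoid Letter) : H :=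
  match (FreeMonoid.toList w).getLast? with
  | some Letter.y =>
      S1 (word (FreeMonoid.ofList (FreeMonoid.toList w).dropLast)) * Y
  | _ => word w

/-- The ℚ-linear map `S : H¹ → H¹` with `S(1) = 1`, `S(Fy) = S₁(F)y`. -/
noncomputable def S (a : H) : H := Finsupp.sum a.coeff fun w c => c • SW w

/-- `S̃` on a word: `S̃(1) = 1` and `S̃(Fy) = S₂(F)y`. -/
noncomputable def StW (w : FreeMonoid Letter) : H :=
  match (FreeMonoid.toList w).getLast? with
  | some Letter.y =>
      S2 (word (FreeMonoid.ofList (FreeMonoid.toList w).dropLast)) * Y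
  | _ => word w

/-- The ℚ-linear map `S̃ : H¹ → H¹` with `S̃(1) = 1`, `S̃(Fy) = S₂(F)y`. -/
noncomputable def St (a : H) : H := Finsupp.sum a.coeff fun w c => c • StW w

/-- The multiple zeta value `ζ(k₁,…,kₙ)`: the sum over strictly decreasing
tuples `m₁ > m₂ > ⋯ > mₙ > 0` of `1/(m₁^{k₁}⋯mₙ^{kₙ})`. -/
noncomputable def mzeta (ks : List ℕ) : ℝ :=
  ∑' m : {f : Fin ks.length → ℕ // (∀ i, 0 < f i) ∧
      ∀ i j : Fin ks.length, i < j → f j < f i},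
    ∏ i : Fin ks.length, ((m.1 i : ℝ) ^ ks.get i)⁻¹

/-- The non-strict multiple zeta value `ζ̄(k₁,…,kₙ)`: the sum over weakly
decreasing tuples `m₁ ≥ m₂ ≥ ⋯ ≥ mₙ > 0` of `1/(m₁^{k₁}⋯mₙ^{kₙ})`. -/
noncomputable def nmzeta (ks : List ℕ) : ℝ :=
  ∑' m : {f : Fin ks.length → ℕ // (∀ i, 0 < f i) ∧
      ∀ i j : Fin ks.length, i ≤ j → f j ≤ f i},
    ∏ i : Fin ks.length, ((m.1 i : ℝ) ^ ks.get i)⁻¹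

/-- The evaluation map `Z : H⁰ → ℝ`, `Z(1) = 1`,
`Z(z_{k₁}⋯z_{kₙ}) = ζ(k₁,…,kₙ)` (extended ℚ-linearly to `H`). -/
noncomputable def Z (a : H) : ℝ := Finsupp.sum a.coeff fun w c => (c : ℝ) * mzeta (toZ w)

/-- The n-evaluation map `Z̄ : H⁰ → ℝ`, `Z̄(1) = 1`,
`Z̄(z_{k₁}⋯z_{kₙ}) = ζ̄(k₁,…,kₙ)` (extended ℚ-linearly to `H`). -/
noncomputable def Zbar (a : H) : ℝ := Finsupp.sum a.coeff fun w c => (c : ℝ) * nmzeta (toZ w)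

/-- `i`-fold n-harmonic power: `a^{*̄ 0} = 1`, `a^{*̄ (i+1)} = a *̄ a^{*̄ i}`. -/
noncomputable def nharmPow : ℕ → H → H
  | 0, _ => 1
  | i + 1, a => nharm a (nharmPow i a)

/-- `i`-fold n-shuffle power: `a^{ш̄ 0} = 1`, `a^{ш̄ (i+1)} = a ш̄ a^{ш̄ i}`. -/
noncomputable def nshPow : ℕ → H → H
  | 0, _ => 1
  | i + 1, a => nsh a (nshPow i a)

end H

open H

/-!
Hoffman's quasi-shuffle algebra explains the theorem. Let `M` be a commutative semigroup of letters
and let `*_t` be the quasi-shuffle product on `R⟨M⟩` whose contracted term carries the coefficient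
`t`, so that on `M = ℕ+` the products `*` and `*̄` are `*_1` and `*_{-1}`. Write `k ⋅ a` for the
operation adding `k` to the first letter of every word of `a` and killing the empty word, and put
`Q_k a = k a + t (k ⋅ a)`. Expanding the recursion of `*_t` on first letters gives
`Q_k a *_t Q_l b = Q_k (a *_t Q_l b) + Q_l (Q_k a *_t b) - t Q_{k+l} (a *_t b)`,
which is the recursion of `*_{-t}` with left multiplication by `k` replaced by `Q_k`. Hence the
linear map `k₁ ⋯ kₙ ↦ Q_{k₁} ⋯ Q_{kₙ} 1` carries `*_{-t}` to `*_t`. For `t = 1` this map is `S`,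
because `S₁(z_k) = z_k + x^k` and left multiplication by `x^k` adds `k` to the first index.
Finally `S` is inverted on `H¹` by `S̃`, since `S₁` and `S₂` are inverse to each other.
-/

namespace QuasiShuffle

open MonoidAlgebra (of)

/-- The free associative algebra `R⟨M⟩` on the letters `M`, in the same encoding as `H`. -/
abbrev WordAlgebra (R M : Type*) [CommRing R] : Type _ := MonoidAlgebra R (FreeMonoid M)

section Letters

variable {R M N : Type*} [CommRing R] [AddCommGroup N] [Module R N]

/-- A letter, as a generator of `R⟨M⟩`. -/
noncomputable def letter (m : M) : WordAlgebra R M := of R _ (FreeMonoid.of m)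

lemma of_of_mul (m : M) (u : FreeMonoid M) :
    of R _ (FreeMonoid.of m * u) = letter m * of R _ u :=
  map_mul ..

lemma linearMap_ext_of {f g : WordAlgebra R M →ₗ[R] N}
    (h : ∀ u, f (of R _ u) = g (of R _ u)) : f = g :=
  (MonoidAlgebra.basis (FreeMonoid M) R).ext h

lemma linearMap_ext_letter_mul {f g : WordAlgebra R M →ₗ[R] N} (one : f 1 = g 1)
    (letter_mul : ∀ m a, f (letter m * a) = g (letter m * a)) : f = g := by
  refine linearMap_ext_of fun u ↦ ?_
  induction u using FreeMonoid.inductionOn' with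
  | one => simpa only [map_one] using one
  | of_mul m u _ => simpa only [of_of_mul] using letter_mul m (of R _ u)

/-- The linear map on `R⟨M⟩` with prescribed values on words. -/
noncomputable def linearExtension (f : FreeMonoid M → N) : WordAlgebra R M →ₗ[R] N :=
  (MonoidAlgebra.basis (FreeMonoid M) R).constr R f

lemma linearExtension_apply (f : FreeMonoid M → N) (a : WordAlgebra R M) :
    linearExtension f a = a.coeff.sum fun u c ↦ c • f u :=
  Module.Basis.constr_apply ..

@[simp]
lemma linearExtension_of (f : FreeMonoid M → N) (u : FreeMonoid M) :
    linearExtension f (of R _ u) = f u :=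
  Module.Basis.constr_basis ..

end Letters

section Product

variable {R M N : Type*} [CommRing R] [Add M] [AddCommGroup N] [Module R N]

/-- The quasi-shuffle product of two words, with contractions weighted by `t`. -/
noncomputable def quasiShuffleWord (t : R) : List M → List M → WordAlgebra R M
  | [], v => of R _ (FreeMonoid.ofList v)
  | k :: u, [] => of R _ (FreeMonoid.ofList (k :: u))
  | k :: u, l :: v =>
      letter k * quasiShuffleWord t u (l :: v) + letter l * quasiShuffleWord t (k :: u) v +
        t • (letter (k + l) * quasiShuffleWord t u v)
termination_by u v => u.length + v.length

/-- The quasi-shuffle product `*_t` on `R⟨M⟩`. -/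
noncomputable def quasiShuffle (t : R) :
    WordAlgebra R M →ₗ[R] WordAlgebra R M →ₗ[R] WordAlgebra R M :=
  linearExtension fun u ↦ linearExtension fun v ↦ quasiShuffleWord t u.toList v.toList

@[simp]
lemma quasiShuffle_one_left (t : R) (b : WordAlgebra R M) : quasiShuffle t 1 b = b := by
  suffices quasiShuffle t (of R _ 1) = LinearMap.id by
    rw [← map_one (of R _), this, LinearMap.id_apply]
  refine linearMap_ext_of fun v ↦ ?_
  simp only [quasiShuffle, linearExtension_of, FreeMonoid.toList_one, quasiShuffleWord,
    FreeMonoid.ofList_toList, LinearMap.id_apply]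

@[simp]
lemma quasiShuffle_one_right (t : R) (a : WordAlgebra R M) : quasiShuffle t a 1 = a := by
  suffices (quasiShuffle t).flip (of R _ 1) = LinearMap.id by
    rw [← map_one (of R _), ← LinearMap.flip_apply, this, LinearMap.id_apply]
  refine linearMap_ext_of fun u ↦ ?_
  simp only [quasiShuffle, LinearMap.flip_apply, linearExtension_of, FreeMonoid.toList_one,
    LinearMap.id_apply]
  cases u using FreeMonoid.casesOn with
  | one => rw [FreeMonoid.toList_one, quasiShuffleWord, FreeMonoid.ofList_nil]
  | of_mul k u => rw [FreeMonoid.toList_of_mul, quasiShuffleWord]; rfl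

lemma quasiShuffle_letter_mul (t : R) (k l : M) (a b : WordAlgebra R M) :
    quasiShuffle t (letter k * a) (letter l * b) =
      letter k * quasiShuffle t a (letter l * b) + letter l * quasiShuffle t (letter k * a) b +
        t • (letter (k + l) * quasiShuffle t a b) := by
  let mulL (m : M) : WordAlgebra R M →ₗ[R] WordAlgebra R M := LinearMap.mulLeft R (letter m)
  suffices (quasiShuffle t).compl₁₂ (mulL k) (mulL l) =
      ((quasiShuffle t).compl₂ (mulL l)).compr₂ (mulL k) +
        ((quasiShuffle t).comp (mulL k)).compr₂ (mulL l) +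
        t • (quasiShuffle t).compr₂ (mulL (k + l)) from
    LinearMap.congr_fun₂ this a b
  refine linearMap_ext_of fun u ↦ linearMap_ext_of fun v ↦ ?_
  simp only [mulL, LinearMap.compl₁₂_apply, LinearMap.compl₂_apply, LinearMap.compr₂_apply,
    LinearMap.comp_apply, LinearMap.add_apply, LinearMap.smul_apply, LinearMap.mulLeft_apply,
    ← of_of_mul, quasiShuffle, linearExtension_of, FreeMonoid.toList_of_mul]
  rw [quasiShuffleWord]

/-- The recursion on first letters determines the quasi-shuffle product. -/
theorem map_quasiShuffle {t : R} {f : WordAlgebra R M →ₗ[R] N} {B : N →ₗ[R] N →ₗ[R] N}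
    {D : M → N → N} (map_letter_mul : ∀ k a, f (letter k * a) = D k (f a))
    (one_left : ∀ v, B (f 1) (f (of R _ v)) = f (of R _ v))
    (one_right : ∀ u, B (f (of R _ u)) (f 1) = f (of R _ u))
    (letter_mul : ∀ k l u v, B (f (letter k * of R _ u)) (f (letter l * of R _ v)) =
      D k (B (f (of R _ u)) (f (letter l * of R _ v))) +
        D l (B (f (letter k * of R _ u)) (f (of R _ v))) +
        t • D (k + l) (B (f (of R _ u)) (f (of R _ v))))
    (a b : WordAlgebra R M) :
    f (quasiShuffle t a b) = B (f a) (f b) := by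
  suffices (quasiShuffle t).compr₂ f = B.compl₁₂ f f from LinearMap.congr_fun₂ this a b
  refine linearMap_ext_of fun u ↦ linearMap_ext_of fun v ↦ ?_
  simp only [LinearMap.compr₂_apply, LinearMap.compl₁₂_apply]
  induction u using FreeMonoid.inductionOn' generalizing v with
  | one => rw [map_one, quasiShuffle_one_left, one_left]
  | of_mul k u ihu =>
    induction v using FreeMonoid.inductionOn' with
    | one => rw [map_one, quasiShuffle_one_right, one_right]
    | of_mul l v ihv =>
      have ihu_cons := ihu (FreeMonoid.of l * v)
      rw [of_of_mul] at ihu_cons ihv ⊢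
      rw [of_of_mul, quasiShuffle_letter_mul, letter_mul, map_add, map_add, map_smul,
        map_letter_mul, map_letter_mul, map_letter_mul, ← of_of_mul l, ihu, ihv, ihu, of_of_mul]

end Product

section AddHead

variable {R M : Type*} [CommRing R]

/-- The operation `k ⋅ a` adding `k` to the first letter of every word of `a`;
the empty word is sent to `0`. -/
noncomputable def addHead [Add M] (k : M) : WordAlgebra R M →ₗ[R] WordAlgebra R M :=
  linearExtension fun u ↦ u.casesOn 0 fun m v ↦ of R _ (FreeMonoid.of (k + m) * v)

@[simp]
lemma addHead_one [Add M] (k : M) : addHead k (1 : WordAlgebra R M) = 0 := by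
  rw [← map_one (of R _), addHead, linearExtension_of, FreeMonoid.casesOn_one]

@[simp]
lemma addHead_letter_mul [Add M] (k m : M) (a : WordAlgebra R M) :
    addHead k (letter m * a) = letter (k + m) * a := by
  suffices addHead k ∘ₗ LinearMap.mulLeft R (letter m) = LinearMap.mulLeft R (letter (k + m)) from
    LinearMap.congr_fun this a
  refine linearMap_ext_of fun u ↦ ?_
  simp only [LinearMap.comp_apply, LinearMap.mulLeft_apply, ← of_of_mul, addHead,
    linearExtension_of, FreeMonoid.casesOn_of_mul]

@[simp]
lemma addHead_addHead [AddSemigroup M] (k m : M) (a : WordAlgebra R M) :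
    addHead k (addHead m a) = addHead (k + m) a := by
  suffices addHead k ∘ₗ addHead m = addHead (R := R) (k + m) from LinearMap.congr_fun this a
  exact linearMap_ext_letter_mul (by simp) (by simp [add_assoc])

end AddHead

section Commutative

variable {R M : Type*} [CommRing R] [AddCommSemigroup M]

lemma quasiShuffle_comm (t : R) (a b : WordAlgebra R M) :
    quasiShuffle t a b = quasiShuffle t b a := by
  let idMap : WordAlgebra R M →ₗ[R] WordAlgebra R M := LinearMap.id
  suffices idMap (quasiShuffle t a b) = (quasiShuffle t).flip (idMap a) (idMap b) from this
  refine map_quasiShuffle (D := fun k a ↦ letter k * a) (fun _ _ ↦ rfl)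
    (fun v ↦ ?_) (fun u ↦ ?_) (fun k l u v ↦ ?_) a b
  · simp only [idMap, LinearMap.id_apply, LinearMap.flip_apply, quasiShuffle_one_right]
  · simp only [idMap, LinearMap.id_apply, LinearMap.flip_apply, quasiShuffle_one_left]
  · simp only [idMap, LinearMap.id_apply, LinearMap.flip_apply, quasiShuffle_letter_mul,
      add_comm k l]
    abel

lemma quasiShuffle_addHead_letter_mul (t : R) (k l : M) (a b : WordAlgebra R M) :
    quasiShuffle t (addHead k a) (letter l * b) =
      addHead k (quasiShuffle t a (letter l * b)) + letter l * quasiShuffle t (addHead k a) b -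
        letter (k + l) * quasiShuffle t a b := by
  let mulRight (c : WordAlgebra R M) : WordAlgebra R M →ₗ[R] WordAlgebra R M :=
    (quasiShuffle t).flip c
  suffices mulRight (letter l * b) ∘ₗ addHead k =
      addHead k ∘ₗ mulRight (letter l * b) +
        LinearMap.mulLeft R (letter l) ∘ₗ mulRight b ∘ₗ addHead k -
        LinearMap.mulLeft R (letter (k + l)) ∘ₗ mulRight b from
    LinearMap.congr_fun this a
  refine linearMap_ext_letter_mul (by simp [mulRight]) fun m a ↦ ?_
  simp only [mulRight, LinearMap.comp_apply, LinearMap.add_apply, LinearMap.sub_apply,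
    LinearMap.flip_apply, LinearMap.mulLeft_apply, addHead_letter_mul, quasiShuffle_letter_mul,
    map_add, map_smul, add_assoc]
  abel

lemma quasiShuffle_letter_mul_addHead (t : R) (k l : M) (a b : WordAlgebra R M) :
    quasiShuffle t (letter k * a) (addHead l b) =
      letter k * quasiShuffle t a (addHead l b) + addHead l (quasiShuffle t (letter k * a) b) -
        letter (k + l) * quasiShuffle t a b := by
  rw [quasiShuffle_comm, quasiShuffle_addHead_letter_mul, quasiShuffle_comm t b,
    quasiShuffle_comm t b, quasiShuffle_comm t _ a, add_comm l, add_comm (addHead l _)]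

lemma quasiShuffle_addHead_addHead (t : R) (k l : M) (a b : WordAlgebra R M) :
    quasiShuffle t (addHead k a) (addHead l b) =
      addHead k (quasiShuffle t a (addHead l b)) + addHead l (quasiShuffle t (addHead k a) b) -
        addHead (k + l) (quasiShuffle t a b) := by
  let mulRight (c : WordAlgebra R M) : WordAlgebra R M →ₗ[R] WordAlgebra R M :=
    (quasiShuffle t).flip c
  suffices mulRight (addHead l b) ∘ₗ addHead k =
      addHead k ∘ₗ mulRight (addHead l b) + addHead l ∘ₗ mulRight b ∘ₗ addHead k -
        addHead (k + l) ∘ₗ mulRight b from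
    LinearMap.congr_fun this a
  refine linearMap_ext_letter_mul (by simp [mulRight]) fun m a ↦ ?_
  simp only [mulRight, LinearMap.comp_apply, LinearMap.add_apply, LinearMap.sub_apply,
    LinearMap.flip_apply, addHead_letter_mul, addHead_addHead, quasiShuffle_letter_mul_addHead,
    map_add, map_sub, add_assoc]
  abel

end Commutative

section ContractionSum

variable {R M : Type*} [CommRing R]

/-- The operator `Q_k a = k a + t (k ⋅ a)`, which prepends the letter `k` or adds it to the
first letter. -/
noncomputable def consOrAddHead [Add M] (t : R) (k : M) :
    WordAlgebra R M →ₗ[R] WordAlgebra R M :=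
  LinearMap.mulLeft R (letter k) + t • addHead k

lemma consOrAddHead_apply [Add M] (t : R) (k : M) (a : WordAlgebra R M) :
    consOrAddHead t k a = letter k * a + t • addHead k a :=
  rfl

lemma addHead_consOrAddHead [AddSemigroup M] (t : R) (k m : M) (a : WordAlgebra R M) :
    addHead k (consOrAddHead t m a) = consOrAddHead t (k + m) a := by
  simp only [consOrAddHead_apply, map_add, map_smul, addHead_letter_mul, addHead_addHead]

lemma quasiShuffle_consOrAddHead [AddCommSemigroup M] (t : R) (k l : M) (a b : WordAlgebra R M) :
    quasiShuffle t (consOrAddHead t k a) (consOrAddHead t l b) =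
      consOrAddHead t k (quasiShuffle t a (consOrAddHead t l b)) +
        consOrAddHead t l (quasiShuffle t (consOrAddHead t k a) b) -
        t • consOrAddHead t (k + l) (quasiShuffle t a b) := by
  simp only [consOrAddHead_apply, map_add, map_smul, LinearMap.add_apply, LinearMap.smul_apply,
    quasiShuffle_letter_mul, quasiShuffle_addHead_letter_mul, quasiShuffle_letter_mul_addHead,
    quasiShuffle_addHead_addHead]
  module

/-- The linear map `k₁ ⋯ kₙ ↦ Q_{k₁} ⋯ Q_{kₙ} 1`: the sum over all contractions of consecutive
letters of a word, each contracted pair contributing a factor `t`. It is obtained by letting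
`R⟨M⟩` act on itself through the operators `Q_k`. -/
noncomputable def contractionSum [Add M] (t : R) : WordAlgebra R M →ₗ[R] WordAlgebra R M :=
  LinearMap.applyₗ 1 ∘ₗ
    (MonoidAlgebra.lift R (Module.End R (WordAlgebra R M)) (FreeMonoid M)
      (FreeMonoid.lift (consOrAddHead t))).toLinearMap

@[simp]
lemma contractionSum_one [Add M] (t : R) : contractionSum t (1 : WordAlgebra R M) = 1 := by
  simp [contractionSum]

lemma contractionSum_letter_mul [Add M] (t : R) (k : M) (a : WordAlgebra R M) :
    contractionSum t (letter k * a) = consOrAddHead t k (contractionSum t a) := by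
  simp [contractionSum, letter]

theorem contractionSum_quasiShuffle_neg [AddCommSemigroup M] (t : R) (a b : WordAlgebra R M) :
    contractionSum t (quasiShuffle (-t) a b) =
      quasiShuffle t (contractionSum t a) (contractionSum t b) := by
  refine map_quasiShuffle (D := fun k ↦ consOrAddHead t k) (contractionSum_letter_mul t)
    (fun v ↦ ?_) (fun u ↦ ?_) (fun k l u v ↦ ?_) a b
  · rw [contractionSum_one, quasiShuffle_one_left]
  · rw [contractionSum_one, quasiShuffle_one_right]
  · rw [contractionSum_letter_mul, contractionSum_letter_mul, quasiShuffle_consOrAddHead, neg_smul,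
      sub_eq_add_neg]

end ContractionSum

end QuasiShuffle

open QuasiShuffle

namespace H

open MonoidAlgebra (of)

section Words

lemma word_mul (u v : FreeMonoid Letter) : word (u * v) = word u * word v :=
  map_mul (of ℚ _) u v

lemma word_of_replicate_x (n : ℕ) :
    word (FreeMonoid.ofList (List.replicate n Letter.x)) = X ^ n := by
  induction n with
  | zero => rfl
  | succ n ih => rw [pow_succ', ← ih, X, ← word_mul]; rfl

lemma z_eq_X_pow_mul_Y (k : ℕ) : z k = X ^ (k - 1) * Y := by
  rw [← word_of_replicate_x, Y, ← word_mul]; rfl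

lemma z_one : z 1 = Y := by
  rw [z_eq_X_pow_mul_Y, Nat.sub_self, pow_zero, one_mul]

lemma z_add (k : ℕ) {m : ℕ} (hm : 0 < m) : z (k + m) = X ^ k * z m := by
  rw [z_eq_X_pow_mul_Y, z_eq_X_pow_mul_Y, ← mul_assoc, ← pow_add, Nat.add_sub_assoc hm]

lemma zListW_cons (k : ℕ) (ks : List ℕ) : zListW (k :: ks) = zW k * zListW ks :=
  rfl

lemma toZAux_replicate_x_append (n m : ℕ) (r : List Letter) :
    toZAux (List.replicate n Letter.x ++ Letter.y :: r) m = (m + n + 1) :: toZAux r 0 := by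
  induction n generalizing m with
  | zero => rfl
  | succ n ih =>
    rw [List.replicate_succ, List.cons_append, toZAux, ih, Nat.add_right_comm m 1 n, add_assoc m n]

lemma toZ_zListW {ks : List ℕ} (pos : ∀ k ∈ ks, 0 < k) : toZ (zListW ks) = ks := by
  induction ks with
  | nil => rfl
  | cons k ks ih =>
    obtain ⟨hk, hks⟩ := List.forall_mem_cons.1 pos
    have toList_cons : (zListW (k :: ks)).toList =
        List.replicate (k - 1) Letter.x ++ Letter.y :: (zListW ks).toList := by
      simp [zListW_cons, zW]
    rw [toZ, toList_cons, toZAux_replicate_x_append, ← toZ, ih hks, Nat.zero_add,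
      Nat.sub_add_cancel hk]

end Words

section IndexWords

/-- The exponents `[k₁, …, kₙ]` of a word in the letters `ℕ+`, as natural numbers. -/
def indices (u : FreeMonoid ℕ+) : List ℕ := u.toList.map fun k : ℕ+ ↦ (k : ℕ)

lemma indices_one : indices 1 = [] :=
  rfl

lemma indices_of_mul (k : ℕ+) (u : FreeMonoid ℕ+) :
    indices (FreeMonoid.of k * u) = (k : ℕ) :: indices u :=
  rfl

lemma indices_pos {u : FreeMonoid ℕ+} : ∀ k ∈ indices u, 0 < k := by
  simp [indices]

/-- The algebra map `ℚ⟨ℕ+⟩ → H` sending the letter `k` to `z_k`, which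
identifies the subalgebra `H¹` with the free algebra on the `z_k`. -/
noncomputable def zHom : WordAlgebra ℚ ℕ+ →ₐ[ℚ] H :=
  MonoidAlgebra.lift ℚ H (FreeMonoid ℕ+) (FreeMonoid.lift fun k : ℕ+ ↦ z k)

lemma zHom_letter (k : ℕ+) : zHom (letter k) = z k := by
  simp [zHom, letter]

lemma zHom_letter_mul (k : ℕ+) (a : WordAlgebra ℚ ℕ+) : zHom (letter k * a) = z k * zHom a := by
  rw [map_mul, zHom_letter]

lemma zHom_of (u : FreeMonoid ℕ+) : zHom (of ℚ _ u) = word (zListW (indices u)) := by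
  induction u using FreeMonoid.inductionOn' with
  | one => rw [map_one, map_one]; rfl
  | of_mul k u ih =>
    rw [of_of_mul, zHom_letter_mul, ih, indices_of_mul, zListW_cons, word_mul, z]

lemma exists_word_mul_Y_eq_zHom (w : FreeMonoid Letter) :
    ∃ (k : ℕ+) (a : WordAlgebra ℚ ℕ+), word w * Y = zHom (letter k * a) := by
  induction w using FreeMonoid.inductionOn' with
  | one => exact ⟨1, 1, by rw [mul_one, zHom_letter, PNat.one_coe, z_one]; exact one_mul Y⟩
  | of_mul c w ih =>
    obtain ⟨k, a, h⟩ := ih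
    rw [word_mul, mul_assoc, h]
    cases c with
    | x =>
      refine ⟨1 + k, a, ?_⟩
      rw [zHom_letter_mul, zHom_letter_mul, PNat.add_coe, PNat.one_coe, z_add 1 k.pos, pow_one,
        mul_assoc, X]
    | y =>
      refine ⟨1, letter k * a, ?_⟩
      rw [zHom_letter_mul 1, PNat.one_coe, z_one, Y]

lemma H1_le_range_zHom : H1 ≤ LinearMap.range zHom.toLinearMap := by
  refine sup_le ?_ ?_
  · rintro _ ⟨F, rfl⟩
    induction F using MonoidAlgebra.induction_linear with
    | zero => simp
    | add F G hF hG => rw [map_add]; exact add_mem hF hG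
    | single w c =>
      obtain ⟨k, a, h⟩ := exists_word_mul_Y_eq_zHom w
      refine ⟨c • (letter k * a), ?_⟩
      rw [map_smul, AlgHom.toLinearMap_apply, ← h, word, ← smul_mul_assoc]
      simp
  · rw [Submodule.span_singleton_le_iff_mem]
    exact ⟨1, map_one zHom⟩

end IndexWords

section Products

/-- The bilinear extension to `H` of a product defined on words through their exponents. -/
noncomputable def indexBilin (f : List ℕ → List ℕ → H) : H →ₗ[ℚ] H →ₗ[ℚ] H :=
  linearExtension fun w₁ ↦ linearExtension fun w₂ ↦ f (toZ w₁) (toZ w₂)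

lemma indexBilin_apply (f : List ℕ → List ℕ → H) (a b : H) :
    indexBilin f a b =
      a.coeff.sum fun w₁ c₁ ↦ b.coeff.sum fun w₂ c₂ ↦ (c₁ * c₂) • f (toZ w₁) (toZ w₂) := by
  simp only [indexBilin, linearExtension_apply, Finsupp.sum, LinearMap.sum_apply,
    LinearMap.smul_apply, Finset.smul_sum, smul_smul]

lemma indexBilin_zHom_of (f : List ℕ → List ℕ → H) (u v : FreeMonoid ℕ+) :
    indexBilin f (zHom (of ℚ _ u)) (zHom (of ℚ _ v)) = f (indices u) (indices v) := by
  have indexBilin_word (w₁ w₂ : FreeMonoid Letter) :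
      indexBilin f (word w₁) (word w₂) = f (toZ w₁) (toZ w₂) := by
    simp only [indexBilin, word, ← MonoidAlgebra.of_apply, linearExtension_of]
  rw [zHom_of, zHom_of, indexBilin_word, toZ_zListW indices_pos, toZ_zListW indices_pos]

lemma indexBilin_zHom {f : List ℕ → List ℕ → H} {t : ℚ}
    (nil_left : ∀ ks, f [] ks = word (zListW ks)) (nil_right : ∀ ks, f ks [] = word (zListW ks))
    (cons_cons : ∀ k l ks ls, f (k :: ks) (l :: ls) =
      z k * f ks (l :: ls) + z l * f (k :: ks) ls + t • (z (k + l) * f ks ls))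
    (a b : WordAlgebra ℚ ℕ+) :
    indexBilin f (zHom a) (zHom b) = zHom (quasiShuffle t a b) := by
  refine (map_quasiShuffle (f := zHom.toLinearMap) (D := fun k F ↦ z k * F) zHom_letter_mul
    (fun v ↦ ?_) (fun u ↦ ?_) (fun k l u v ↦ ?_) a b).symm
  · rw [← map_one (of ℚ _), AlgHom.toLinearMap_apply, AlgHom.toLinearMap_apply,
      indexBilin_zHom_of, indices_one, nil_left, zHom_of]
  · rw [← map_one (of ℚ _), AlgHom.toLinearMap_apply, AlgHom.toLinearMap_apply,
      indexBilin_zHom_of, indices_one, nil_right, zHom_of]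
  · simp only [AlgHom.toLinearMap_apply, ← of_of_mul, indexBilin_zHom_of, indices_of_mul,
      cons_cons, PNat.add_coe]

lemma harm_zHom (a b : WordAlgebra ℚ ℕ+) :
    harm (zHom a) (zHom b) = zHom (quasiShuffle 1 a b) := by
  rw [harm, ← indexBilin_apply harmW]
  refine indexBilin_zHom (fun ks ↦ ?_) (fun ks ↦ ?_) (fun k l ks ls ↦ ?_) a b
  · rw [harmW]
  · cases ks <;> rw [harmW]
  · rw [harmW, one_smul]

lemma nharm_zHom (a b : WordAlgebra ℚ ℕ+) :
    nharm (zHom a) (zHom b) = zHom (quasiShuffle (-1) a b) := by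
  rw [nharm, ← indexBilin_apply nharmW]
  refine indexBilin_zHom (fun ks ↦ ?_) (fun ks ↦ ?_) (fun k l ks ls ↦ ?_) a b
  · rw [nharmW]
  · cases ks <;> rw [nharmW]
  · rw [nharmW, neg_one_smul, sub_eq_add_neg]

end Products

section S

lemma S1_X : S1 X = X := by simp [S1, X, word]

lemma S1_Y : S1 Y = X + Y := by simp [S1, Y, word]

lemma S2_X : S2 X = X := by simp [S2, X, word]

lemma S2_Y : S2 Y = Y - X := by simp [S2, Y, word]

lemma S1_z {k : ℕ} (hk : 0 < k) : S1 (z k) = z k + X ^ k := by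
  rw [z_eq_X_pow_mul_Y, map_mul, map_pow, S1_X, S1_Y, mul_add, ← pow_succ, Nat.sub_add_cancel hk,
    add_comm]

lemma algHom_ext_X_Y {A : Type*} [Semiring A] [Algebra ℚ A] {f g : H →ₐ[ℚ] A}
    (hX : f X = g X) (hY : f Y = g Y) : f = g := by
  refine (MonoidAlgebra.lift ℚ A (FreeMonoid Letter)).symm.injective (FreeMonoid.hom_eq ?_)
  rintro (_ | _)
  exacts [hX, hY]

lemma S1_comp_S2 : S1.comp S2 = AlgHom.id ℚ H :=
  algHom_ext_X_Y (by simp [S2_X, S1_X]) (by simp [S2_Y, S1_Y, S1_X])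

lemma S2_comp_S1 : S2.comp S1 = AlgHom.id ℚ H :=
  algHom_ext_X_Y (by simp [S2_X, S1_X]) (by simp [S1_Y, S2_Y, S2_X])

lemma S_eq_linearExtension (a : H) : S a = linearExtension SW a :=
  (linearExtension_apply SW a).symm

lemma St_eq_linearExtension (a : H) : St a = linearExtension StW a :=
  (linearExtension_apply StW a).symm

lemma S_mul_Y (F : H) : S (F * Y) = S1 F * Y := by
  suffices linearExtension SW ∘ₗ LinearMap.mulRight ℚ Y =
      LinearMap.mulRight ℚ Y ∘ₗ S1.toLinearMap by
    rw [S_eq_linearExtension]; exact LinearMap.congr_fun this F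
  refine linearMap_ext_of fun w ↦ ?_
  change linearExtension SW (of ℚ _ w * of ℚ _ (FreeMonoid.of Letter.y)) = S1 (word w) * Y
  rw [← map_mul, linearExtension_of]
  simp [SW]

lemma St_mul_Y (F : H) : St (F * Y) = S2 F * Y := by
  suffices linearExtension StW ∘ₗ LinearMap.mulRight ℚ Y =
      LinearMap.mulRight ℚ Y ∘ₗ S2.toLinearMap by
    rw [St_eq_linearExtension]; exact LinearMap.congr_fun this F
  refine linearMap_ext_of fun w ↦ ?_
  change linearExtension StW (of ℚ _ w * of ℚ _ (FreeMonoid.of Letter.y)) = S2 (word w) * Y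
  rw [← map_mul, linearExtension_of]
  simp [StW]

lemma S_one : S 1 = 1 := by
  rw [S_eq_linearExtension, ← map_one (of ℚ _), linearExtension_of]; rfl

lemma St_one : St 1 = 1 := by
  rw [St_eq_linearExtension, ← map_one (of ℚ _), linearExtension_of]; rfl

lemma S_mul_Y_add_smul_one (F : H) (c : ℚ) : S (F * Y + c • 1) = S1 F * Y + c • 1 := by
  rw [← S_mul_Y, S_eq_linearExtension, map_add, map_smul, ← S_eq_linearExtension,
    ← S_eq_linearExtension, S_one]

lemma St_mul_Y_add_smul_one (F : H) (c : ℚ) : St (F * Y + c • 1) = S2 F * Y + c • 1 := by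
  rw [← St_mul_Y, St_eq_linearExtension, map_add, map_smul, ← St_eq_linearExtension,
    ← St_eq_linearExtension, St_one]

lemma mem_H1_iff {a : H} : a ∈ H1 ↔ ∃ (F : H) (c : ℚ), F * Y + c • 1 = a := by
  simp [H1, Submodule.mem_sup, Submodule.mem_span_singleton]

lemma bijOn_S_H1 : Set.BijOn S (H1 : Set H) (H1 : Set H) := by
  refine Set.InvOn.bijOn (f' := St) ⟨fun a ha ↦ ?_, fun a ha ↦ ?_⟩ (fun a ha ↦ ?_) (fun a ha ↦ ?_)
  all_goals obtain ⟨F, c, rfl⟩ := mem_H1_iff.1 ha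
  · rw [S_mul_Y_add_smul_one, St_mul_Y_add_smul_one, ← AlgHom.comp_apply, S2_comp_S1,
      AlgHom.id_apply]
  · rw [St_mul_Y_add_smul_one, S_mul_Y_add_smul_one, ← AlgHom.comp_apply, S1_comp_S2,
      AlgHom.id_apply]
  · exact mem_H1_iff.2 ⟨S1 F, c, (S_mul_Y_add_smul_one F c).symm⟩
  · exact mem_H1_iff.2 ⟨S2 F, c, (St_mul_Y_add_smul_one F c).symm⟩

lemma exists_mul_Y_eq_zHom_letter_mul (k : ℕ+) (u : FreeMonoid ℕ+) :
    ∃ F : H, F * Y = zHom (letter k * of ℚ _ u) := by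
  induction u using FreeMonoid.inductionOn' generalizing k with
  | one =>
    exact ⟨X ^ ((k : ℕ) - 1), by rw [map_one, mul_one, zHom_letter, z_eq_X_pow_mul_Y]⟩
  | of_mul m u ih =>
    obtain ⟨F, hF⟩ := ih m
    exact ⟨z k * F, by rw [zHom_letter_mul, of_of_mul, ← hF, mul_assoc]⟩

lemma zHom_consOrAddHead_add (t : ℚ) (k m : ℕ+) (a : WordAlgebra ℚ ℕ+) :
    zHom (consOrAddHead t (k + m) a) = X ^ (k : ℕ) * zHom (consOrAddHead t m a) := by
  have z_add_pnat (k m : ℕ+) : z (k + m : ℕ+) = X ^ (k : ℕ) * z m := z_add k m.pos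
  suffices zHom.toLinearMap ∘ₗ consOrAddHead t (k + m) =
      LinearMap.mulLeft ℚ (X ^ (k : ℕ)) ∘ₗ zHom.toLinearMap ∘ₗ consOrAddHead t m from
    LinearMap.congr_fun this a
  refine linearMap_ext_letter_mul ?_ fun n a ↦ ?_ <;>
    simp only [LinearMap.comp_apply, LinearMap.mulLeft_apply, AlgHom.toLinearMap_apply,
      consOrAddHead_apply, addHead_one, addHead_letter_mul, smul_zero, add_zero, mul_one,
      map_add, map_smul, zHom_letter, zHom_letter_mul, add_assoc, z_add_pnat k, mul_assoc]

lemma zHom_consOrAddHead_consOrAddHead (k m : ℕ+) (a : WordAlgebra ℚ ℕ+) :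
    zHom (consOrAddHead 1 k (consOrAddHead 1 m a)) = S1 (z k) * zHom (consOrAddHead 1 m a) := by
  rw [consOrAddHead_apply 1 k, addHead_consOrAddHead, one_smul, map_add, zHom_letter_mul,
    zHom_consOrAddHead_add, S1_z k.pos, add_mul]

lemma S_zHom_letter_mul_of (k : ℕ+) (u : FreeMonoid ℕ+) :
    S (zHom (letter k * of ℚ _ u)) = zHom (contractionSum 1 (letter k * of ℚ _ u)) := by
  induction u using FreeMonoid.inductionOn' generalizing k with
  | one =>
    rw [map_one, contractionSum_letter_mul, contractionSum_one, consOrAddHead_apply, addHead_one,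
      smul_zero, add_zero, mul_one, zHom_letter, z_eq_X_pow_mul_Y, S_mul_Y, map_pow, S1_X]
  | of_mul m u ih =>
    obtain ⟨F, hF⟩ := exists_mul_Y_eq_zHom_letter_mul m u
    calc S (zHom (letter k * of ℚ _ (FreeMonoid.of m * u)))
        = S (z k * F * Y) := by rw [zHom_letter_mul, of_of_mul, ← hF, mul_assoc]
      _ = S1 (z k) * S (zHom (letter m * of ℚ _ u)) := by
        rw [S_mul_Y, map_mul, mul_assoc, ← S_mul_Y, hF]
      _ = zHom (contractionSum 1 (letter k * of ℚ _ (FreeMonoid.of m * u))) := by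
        rw [ih, of_of_mul, contractionSum_letter_mul, contractionSum_letter_mul,
          contractionSum_letter_mul, zHom_consOrAddHead_consOrAddHead]

lemma S_zHom (a : WordAlgebra ℚ ℕ+) : S (zHom a) = zHom (contractionSum 1 a) := by
  suffices linearExtension SW ∘ₗ zHom.toLinearMap = zHom.toLinearMap ∘ₗ contractionSum 1 by
    rw [S_eq_linearExtension]; exact LinearMap.congr_fun this a
  refine linearMap_ext_of fun u ↦ ?_
  simp only [LinearMap.comp_apply, AlgHom.toLinearMap_apply, ← S_eq_linearExtension]
  cases u using FreeMonoid.casesOn with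
  | one => rw [map_one, contractionSum_one, map_one, S_one]
  | of_mul k u => rw [of_of_mul, S_zHom_letter_mul_of]

end S

end H

/-- `S(w₁ *̄ w₂) = S(w₁) * S(w₂)` for all `w₁, w₂ ∈ H¹`; together with the fact
that `S` maps `H¹` bijectively onto `H¹` (it is ℚ-linear by construction),
this says `S` is a ℚ-algebra isomorphism from `(H¹, *̄)` to `(H¹, *)`. -/
theorem S_nharm_to_harm :
    (∀ w1 ∈ H1, ∀ w2 ∈ H1, S (nharm w1 w2) = harm (S w1) (S w2)) ∧
    Set.BijOn S (H1 : Set H) (H1 : Set H) := by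
  refine ⟨fun w1 hw1 w2 hw2 ↦ ?_, bijOn_S_H1⟩
  obtain ⟨a, rfl⟩ := H1_le_range_zHom hw1
  obtain ⟨b, rfl⟩ := H1_le_range_zHom hw2
  calc S (nharm (zHom a) (zHom b))
      = zHom (contractionSum 1 (quasiShuffle (-1) a b)) := by rw [nharm_zHom, S_zHom]
    _ = zHom (quasiShuffle 1 (contractionSum 1 a) (contractionSum 1 b)) := by
      rw [contractionSum_quasiShuffle_neg]
    _ = harm (S (zHom a)) (S (zHom b)) := by rw [S_zHom, S_zHom, harm_zHom]
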